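/- For every finite simple graph G on n vertices and every integer L with 1 ≤ L < n, the sum of Q(γ) over all directed simple paths γ of length exactly L in G satisfies Σ_{|γ|=L} Q(γ) ≤ (8 e n / L)^{L/2 + 1}. -/

import Mathlib

/-!
Put `W u v = 1 / deg u` on the edges, so that `W` is substochastic and a step of `Q` is
`max (W u v) (W v u)`. Let `c` be the column sums of `W`, and let `K` be the sum of `W` and its
Bayesian reversal `W v u / c u`; the rows of `K` sum to at most `2`. Then
`max (W u v) (W v u) ^ 2 ≤ (c u + c v) * (K u v * K v u)`.
Along a path `γ` each vertex occurs once, so the factors `c (γ i) + c (γ (i + 1))` sum to at most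
`2 n`, and by AM-GM their product is at most `(2 n / L) ^ L`. After a square root, a second
application of AM-GM replaces the two products of entries of `K`, read along `γ` forwards and
backwards, by their mean. Summed over all walks of length `L`, either product contributes at most
`n * 2 ^ L`, which gives the bound `n * √(8 n / L) ^ L`.
-/

open Real

noncomputable section

namespace RumourSpreading

/-- The degree of a vertex, defined without decidability assumptions. -/
def deg {V : Type*} (G : SimpleGraph V) (u : V) : ℕ := (G.neighborSet u).ncard

/-- `Q(γ) = Π_{i=1}^{|γ|} 1 / min(deg(γ_{i-1}), deg(γ_i))` for a walk `γ`. -/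
def Q {V : Type*} (G : SimpleGraph V) {u v : V} (p : G.Walk u v) : ℝ :=
  ∏ i ∈ Finset.range p.length,
    ((min (deg G (p.getVert i)) (deg G (p.getVert (i + 1))) : ℝ))⁻¹

theorem prod_le_sum_div_card_pow {ι : Type*} (s : Finset ι) {z : ι → ℝ} (hz : ∀ i ∈ s, 0 ≤ z i) :
    ∏ i ∈ s, z i ≤ ((∑ i ∈ s, z i) / s.card) ^ s.card := by
  obtain rfl | hs := s.eq_empty_or_nonempty
  · simp
  have hcard : (0 : ℝ) < s.card := by exact_mod_cast hs.card_pos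
  have amgm := geom_mean_le_arith_mean s (fun _ ↦ 1) z (fun _ _ ↦ zero_le_one)
    (by simpa using hcard) hz
  simp only [rpow_one, one_mul, Finset.sum_const, nsmul_eq_mul, mul_one] at amgm
  rwa [rpow_inv_le_iff_of_pos (Finset.prod_nonneg hz)
    (div_nonneg (Finset.sum_nonneg hz) hcard.le) hcard, rpow_natCast] at amgm

theorem card_mul_sqrt_pow_le {n : ℝ} (hn : 0 ≤ n) {L : ℕ} (hL : 1 ≤ L) :
    n * √(8 * n / L) ^ L ≤ (8 * exp 1 * n / L) ^ ((L : ℝ) / 2 + 1) := by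
  have hL0 : (0 : ℝ) < L := by exact_mod_cast hL
  set y := 8 * n / L with hy
  have hy0 : 0 ≤ y := by positivity
  have hn_le : n ≤ y * exp (L / 2 + 1) := by
    have hn_eq : n = y * (L / 8) := by rw [hy]; field_simp
    rw [hn_eq]
    gcongr
    linarith [add_one_le_exp ((L : ℝ) / 2 + 1)]
  calc n * √y ^ L ≤ y * exp (L / 2 + 1) * y ^ ((L : ℝ) / 2) := by
        rw [rpow_div_two_eq_sqrt _ hy0, rpow_natCast]
        gcongr
    _ = (exp 1 * y) ^ ((L : ℝ) / 2 + 1) := by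
        rw [mul_rpow (exp_pos 1).le hy0, exp_one_rpow, rpow_add_one' hy0 (by positivity)]
        ring
    _ = (8 * exp 1 * n / L) ^ ((L : ℝ) / 2 + 1) := by
        rw [hy]
        ring_nf

section Walks

variable {V R : Type*} {G : SimpleGraph V} {u v : V}

/-- The weight of a walk `γ` under a matrix `A` of step weights, `∏ i, A (γ i) (γ (i + 1))`.
The `i`-th vertex `γ i` is `p.getVert i`. -/
def walkWeight [CommMonoid R] (A : Matrix V V R) (p : G.Walk u v) : R :=
  ∏ i ∈ Finset.range p.length, A (p.getVert i) (p.getVert (i + 1))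

theorem walkWeight_cons [CommMonoid R] (A : Matrix V V R) {w : V} (h : G.Adj u v)
    (p : G.Walk v w) : walkWeight A (p.cons h) = A u v * walkWeight A p := by
  simp [walkWeight, Finset.prod_range_succ', mul_comm]

theorem walkWeight_nonneg [CommSemiring R] [PartialOrder R] [IsOrderedRing R] {A : Matrix V V R}
    (hA : ∀ x y, 0 ≤ A x y) (p : G.Walk u v) : 0 ≤ walkWeight A p :=
  Finset.prod_nonneg fun _ _ ↦ hA _ _

theorem sum_getVert_le_of_isPath [Fintype V] [AddCommMonoid R] [PartialOrder R]
    [IsOrderedAddMonoid R] {f : V → R} (hf : ∀ x, 0 ≤ f x) {p : G.Walk u v} (hp : p.IsPath) :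
    ∑ i ∈ Finset.range (p.length + 1), f (p.getVert i) ≤ ∑ x, f x := by
  classical
  have hinj : Set.InjOn p.getVert (Finset.range (p.length + 1)) := fun i hi j hj ↦
    hp.getVert_injOn (Finset.mem_range_succ_iff.1 hi) (Finset.mem_range_succ_iff.1 hj)
  rw [← Finset.sum_image hinj]
  exact Finset.sum_le_univ_sum_of_nonneg hf

theorem sum_add_getVert_le_of_isPath [Fintype V] [CommRing R] [LinearOrder R]
    [IsStrictOrderedRing R] {f : V → R} (hf : ∀ x, 0 ≤ f x) {p : G.Walk u v} (hp : p.IsPath) :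
    ∑ i ∈ Finset.range p.length, (f (p.getVert i) + f (p.getVert (i + 1))) ≤ 2 * ∑ x, f x := by
  have htotal := sum_getVert_le_of_isPath hf hp
  have hlast := Finset.sum_range_succ (fun i ↦ f (p.getVert i)) p.length
  have hfirst := Finset.sum_range_succ' (fun i ↦ f (p.getVert i)) p.length
  rw [Finset.sum_add_distrib]
  linarith [hf (p.getVert 0), hf (p.getVert p.length)]

variable [DecidableEq V]

theorem sum_finsetWalkLength_succ [G.LocallyFinite] [AddCommMonoid R] (n : ℕ)
    (f : G.Walk u v → R) :
    ∑ p ∈ G.finsetWalkLength (n + 1) u v, f p =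
      ∑ w : G.neighborSet u, ∑ p ∈ G.finsetWalkLength n w v, f (p.cons w.property) := by
  rw [SimpleGraph.finsetWalkLength, Finset.sum_biUnion]
  · simp only [Finset.sum_map]
    rfl
  · rintro ⟨w, hw⟩ - ⟨w', hw'⟩ - hne
    simp only [Function.onFun, Finset.disjoint_left, Finset.mem_map]
    rintro _ ⟨q, -, rfl⟩ ⟨q', -, heq⟩
    cases heq
    exact hne rfl

variable [Fintype V] [CommSemiring R] [PartialOrder R] [IsOrderedRing R] {A : Matrix V V R}

theorem sum_pow_apply_le (hA : ∀ x y, 0 ≤ A x y) {r : R} (hr : ∀ x, ∑ y, A x y ≤ r) (L : ℕ)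
    (x : V) : ∑ y, (A ^ L) x y ≤ r ^ L := by
  have hr0 : 0 ≤ r := (Finset.sum_nonneg fun y _ ↦ hA x y).trans (hr x)
  induction L with
  | zero => simp [Matrix.one_apply]
  | succ n ih =>
    calc ∑ y, (A ^ (n + 1)) x y = ∑ z, (A ^ n) x z * ∑ y, A z y := by
          simp only [pow_succ, Matrix.mul_apply, Finset.mul_sum]
          exact Finset.sum_comm
      _ ≤ ∑ z, (A ^ n) x z * r := by
          gcongr with z
          exacts [Matrix.pow_apply_nonneg hA n _ _, hr z]
      _ = (∑ z, (A ^ n) x z) * r := (Finset.sum_mul ..).symm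
      _ ≤ r ^ (n + 1) := by
          rw [pow_succ]
          gcongr

theorem sum_sum_pow_apply_le (hA : ∀ x y, 0 ≤ A x y) {r : R} (hr : ∀ x, ∑ y, A x y ≤ r) (L : ℕ) :
    ∑ x, ∑ y, (A ^ L) x y ≤ Fintype.card V * r ^ L :=
  calc ∑ x, ∑ y, (A ^ L) x y ≤ ∑ _x : V, r ^ L :=
        Finset.sum_le_sum fun x _ ↦ sum_pow_apply_le hA hr L x
    _ = Fintype.card V * r ^ L := by simp

variable [DecidableRel G.Adj]

theorem sum_walkWeight_le_pow_apply (hA : ∀ x y, 0 ≤ A x y) (L : ℕ) (u v : V) :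
    ∑ p ∈ G.finsetWalkLength L u v, walkWeight A p ≤ (A ^ L) u v := by
  induction L generalizing u v with
  | zero => obtain rfl | h := eq_or_ne u v <;> simp [SimpleGraph.finsetWalkLength, walkWeight, *]
  | succ n ih =>
    calc ∑ p ∈ G.finsetWalkLength (n + 1) u v, walkWeight A p
        = ∑ w : G.neighborSet u, A u w * ∑ p ∈ G.finsetWalkLength n w v, walkWeight A p := by
          simp only [sum_finsetWalkLength_succ, Finset.mul_sum]
          exact Finset.sum_congr rfl fun w _ ↦ Finset.sum_congr rfl fun p _ ↦
            walkWeight_cons A w.property p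
      _ ≤ ∑ w : G.neighborSet u, A u w * (A ^ n) w v := by
          gcongr with w
          exacts [hA _ _, ih _ _]
      _ = ∑ w ∈ G.neighborFinset u, A u w * (A ^ n) w v :=
          (Finset.sum_subtype _ (G.mem_neighborFinset u) fun w ↦ A u w * (A ^ n) w v).symm
      _ ≤ ∑ w, A u w * (A ^ n) w v :=
          Finset.sum_le_univ_sum_of_nonneg fun w ↦
            mul_nonneg (hA _ _) (Matrix.pow_apply_nonneg hA n _ _)
      _ = (A ^ (n + 1)) u v := by rw [pow_succ', Matrix.mul_apply]

theorem sum_sum_walkWeight_le (hA : ∀ x y, 0 ≤ A x y) {r : R} (hr : ∀ x, ∑ y, A x y ≤ r)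
    (L : ℕ) :
    ∑ u, ∑ v, ∑ p ∈ G.finsetWalkLength L u v, walkWeight A p ≤ Fintype.card V * r ^ L :=
  (Finset.sum_le_sum fun u _ ↦ Finset.sum_le_sum fun v _ ↦
    sum_walkWeight_le_pow_apply hA L u v).trans (sum_sum_pow_apply_le hA hr L)

theorem sum_sum_walkWeight_transpose_le (hA : ∀ x y, 0 ≤ A x y) {r : R}
    (hr : ∀ x, ∑ y, A x y ≤ r) (L : ℕ) :
    ∑ u, ∑ v, ∑ p ∈ G.finsetWalkLength L u v, walkWeight A.transpose p ≤
      Fintype.card V * r ^ L :=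
  calc ∑ u, ∑ v, ∑ p ∈ G.finsetWalkLength L u v, walkWeight A.transpose p
    _ ≤ ∑ u, ∑ v, (A.transpose ^ L) u v :=
        Finset.sum_le_sum fun u _ ↦ Finset.sum_le_sum fun v _ ↦
          sum_walkWeight_le_pow_apply (fun x y ↦ hA y x) L u v
    _ = ∑ u, ∑ v, (A ^ L) u v := by
        simp only [← Matrix.transpose_pow, Matrix.transpose_apply]
        exact Finset.sum_comm
    _ ≤ Fintype.card V * r ^ L := sum_sum_pow_apply_le hA hr L

end Walks

section Substochastic

variable {V : Type*} {W : Matrix V V ℝ}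

/-- The symmetrised step weights `max (W u v) (W v u)`; when `W` is the simple random walk, these
are the factors `1 / min (deg u) (deg v)` of `Q`. -/
def symmMax (W : Matrix V V ℝ) : Matrix V V ℝ := Matrix.of fun u v ↦ max (W u v) (W v u)

theorem symmMax_comm (W : Matrix V V ℝ) (u v : V) : symmMax W u v = symmMax W v u :=
  max_comm _ _

variable [Fintype V]

/-- The column sums of `W`: the mass which each vertex receives when `W` is applied to the
counting measure. -/
def colSum (W : Matrix V V ℝ) (v : V) : ℝ := ∑ u, W u v

/-- The Bayesian reversal of `W` with respect to the counting measure. The rows at vertices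
that receive no mass are zero, by the convention `x / 0 = 0`. -/
def reversal (W : Matrix V V ℝ) : Matrix V V ℝ := Matrix.of fun u v ↦ W v u / colSum W u

/-- The kernel which moves by `W` or by its reversal; its rows have mass up to `2`. -/
def twoWay (W : Matrix V V ℝ) : Matrix V V ℝ := W + reversal W

theorem colSum_nonneg (hW : ∀ x y, 0 ≤ W x y) (v : V) : 0 ≤ colSum W v :=
  Finset.sum_nonneg fun u _ ↦ hW u v

theorem sum_colSum_le_card (hW1 : ∀ x, ∑ y, W x y ≤ 1) : ∑ v, colSum W v ≤ Fintype.card V :=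
  calc ∑ v, colSum W v = ∑ u, ∑ v, W u v := Finset.sum_comm
    _ ≤ ∑ _u : V, 1 := Finset.sum_le_sum fun u _ ↦ hW1 u
    _ = Fintype.card V := by simp

theorem colSum_mul_reversal (hW : ∀ x y, 0 ≤ W x y) (u v : V) :
    colSum W u * reversal W u v = W v u :=
  mul_div_cancel_of_imp' fun h ↦
    (Finset.sum_eq_zero_iff_of_nonneg fun x _ ↦ hW x u).1 h v (Finset.mem_univ v)

theorem reversal_nonneg (hW : ∀ x y, 0 ≤ W x y) (u v : V) : 0 ≤ reversal W u v :=
  div_nonneg (hW v u) (colSum_nonneg hW u)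

theorem twoWay_nonneg (hW : ∀ x y, 0 ≤ W x y) (u v : V) : 0 ≤ twoWay W u v :=
  add_nonneg (hW u v) (reversal_nonneg hW u v)

theorem sum_reversal_le_one (W : Matrix V V ℝ) (u : V) : ∑ v, reversal W u v ≤ 1 :=
  calc ∑ v, reversal W u v = colSum W u / colSum W u := (Finset.sum_div ..).symm
    _ ≤ 1 := div_self_le_one _

theorem sum_twoWay_le_two (hW1 : ∀ x, ∑ y, W x y ≤ 1) (u : V) : ∑ v, twoWay W u v ≤ 2 :=
  calc ∑ v, twoWay W u v = ∑ v, W u v + ∑ v, reversal W u v := Finset.sum_add_distrib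
    _ ≤ 2 := by linarith [hW1 u, sum_reversal_le_one W u]

theorem symmMax_sq_le (hW : ∀ x y, 0 ≤ W x y) (u v : V) :
    symmMax W u v ^ 2 ≤ (colSum W u + colSum W v) * (twoWay W u v * twoWay W v u) := by
  wlog h : W v u ≤ W u v generalizing u v
  · rw [symmMax_comm, add_comm, mul_comm (twoWay W u v)]
    exact this v u (le_of_not_ge h)
  calc symmMax W u v ^ 2 = W u v ^ 2 := congrArg (· ^ 2) (max_eq_left h)
    _ = colSum W v * (W u v * reversal W v u) := by
        linear_combination -W u v * colSum_mul_reversal hW v u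
    _ ≤ (colSum W u + colSum W v) * (twoWay W u v * twoWay W v u) := by
        have hstep : W u v ≤ twoWay W u v := le_add_of_nonneg_right (reversal_nonneg hW u v)
        have hback : reversal W v u ≤ twoWay W v u := le_add_of_nonneg_left (hW v u)
        have hcol : colSum W v ≤ colSum W u + colSum W v :=
          le_add_of_nonneg_left (colSum_nonneg hW u)
        exact mul_le_mul hcol
          (mul_le_mul hstep hback (reversal_nonneg hW v u) ((hW u v).trans hstep))
          (mul_nonneg (hW u v) (reversal_nonneg hW v u)) ((colSum_nonneg hW v).trans hcol)

variable {G : SimpleGraph V} {u v : V}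

theorem prod_colSum_add_le_of_isPath (hW : ∀ x y, 0 ≤ W x y) (hW1 : ∀ x, ∑ y, W x y ≤ 1)
    {p : G.Walk u v} (hp : p.IsPath) :
    ∏ i ∈ Finset.range p.length, (colSum W (p.getVert i) + colSum W (p.getVert (i + 1))) ≤
      (2 * Fintype.card V / p.length) ^ p.length := by
  have hnonneg (i : ℕ) : 0 ≤ colSum W (p.getVert i) + colSum W (p.getVert (i + 1)) :=
    add_nonneg (colSum_nonneg hW _) (colSum_nonneg hW _)
  have hsum := sum_add_getVert_le_of_isPath (colSum_nonneg hW) hp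
  refine (prod_le_sum_div_card_pow _ fun i _ ↦ hnonneg i).trans ?_
  rw [Finset.card_range]
  gcongr
  · exact div_nonneg (Finset.sum_nonneg fun i _ ↦ hnonneg i) (Nat.cast_nonneg _)
  · linarith [sum_colSum_le_card hW1]

theorem walkWeight_symmMax_sq_le (hW : ∀ x y, 0 ≤ W x y) (p : G.Walk u v) :
    walkWeight (symmMax W) p ^ 2 ≤
      (∏ i ∈ Finset.range p.length, (colSum W (p.getVert i) + colSum W (p.getVert (i + 1)))) *
        (walkWeight (twoWay W) p * walkWeight (twoWay W).transpose p) := by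
  simp only [walkWeight, ← Finset.prod_pow, ← Finset.prod_mul_distrib]
  exact Finset.prod_le_prod (fun _ _ ↦ sq_nonneg _) fun _ _ ↦ symmMax_sq_le hW _ _

theorem walkWeight_symmMax_le_of_isPath (hW : ∀ x y, 0 ≤ W x y) (hW1 : ∀ x, ∑ y, W x y ≤ 1)
    {p : G.Walk u v} (hp : p.IsPath) :
    walkWeight (symmMax W) p ≤ √(2 * Fintype.card V / p.length) ^ p.length *
      ((walkWeight (twoWay W) p + walkWeight (twoWay W).transpose p) / 2) := by
  set a := walkWeight (twoWay W) p
  set b := walkWeight (twoWay W).transpose p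
  have ha : 0 ≤ a := walkWeight_nonneg (twoWay_nonneg hW) p
  have hb : 0 ≤ b := walkWeight_nonneg (fun x y ↦ twoWay_nonneg hW y x) p
  refine le_of_sq_le_sq ?_ (by positivity)
  calc walkWeight (symmMax W) p ^ 2
      ≤ (2 * Fintype.card V / p.length) ^ p.length * (a * b) :=
        (walkWeight_symmMax_sq_le hW p).trans <|
          mul_le_mul_of_nonneg_right (prod_colSum_add_le_of_isPath hW hW1 hp) (mul_nonneg ha hb)
    _ ≤ (2 * Fintype.card V / p.length) ^ p.length * ((a + b) / 2) ^ 2 := by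
        gcongr
        linarith [four_mul_le_sq_add a b]
    _ = (√(2 * Fintype.card V / p.length) ^ p.length * ((a + b) / 2)) ^ 2 := by
        rw [mul_pow, pow_right_comm, sq_sqrt (by positivity)]

theorem sum_Q_paths_le_general [DecidableEq V] (G : SimpleGraph V) [DecidableRel G.Adj]
    (hW : ∀ x y, 0 ≤ W x y) (hW1 : ∀ x, ∑ y, W x y ≤ 1) (L : ℕ) :
    ∑ u, ∑ v, ∑ p ∈ (G.finsetWalkLength L u v).filter (fun p ↦ p.IsPath),
        walkWeight (symmMax W) p ≤
      Fintype.card V * √(8 * Fintype.card V / L) ^ L := by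
  set C := √(2 * Fintype.card V / L) ^ L
  have hK := twoWay_nonneg hW
  have hmean {u v : V} (p : G.Walk u v) :
      0 ≤ (walkWeight (twoWay W) p + walkWeight (twoWay W).transpose p) / 2 :=
    div_nonneg (add_nonneg (walkWeight_nonneg hK p) (walkWeight_nonneg (fun x y ↦ hK y x) p))
      zero_le_two
  calc ∑ u, ∑ v, ∑ p ∈ (G.finsetWalkLength L u v).filter (fun p ↦ p.IsPath),
          walkWeight (symmMax W) p
      ≤ ∑ u, ∑ v, ∑ p ∈ G.finsetWalkLength L u v,
          C * ((walkWeight (twoWay W) p + walkWeight (twoWay W).transpose p) / 2) := by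
        gcongr with u _ v
        rw [Finset.sum_filter]
        refine Finset.sum_le_sum fun p hp ↦ ?_
        split_ifs with hpath
        · obtain rfl := SimpleGraph.mem_finsetWalkLength_iff.1 hp
          exact walkWeight_symmMax_le_of_isPath hW hW1 hpath
        · exact mul_nonneg (by positivity) (hmean p)
    _ = C * ((∑ u, ∑ v, ∑ p ∈ G.finsetWalkLength L u v, walkWeight (twoWay W) p +
          ∑ u, ∑ v, ∑ p ∈ G.finsetWalkLength L u v, walkWeight (twoWay W).transpose p) / 2) := by
        simp only [← Finset.mul_sum, ← Finset.sum_div, Finset.sum_add_distrib]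
    _ ≤ C * (Fintype.card V * 2 ^ L) := by
        gcongr
        linarith [sum_sum_walkWeight_le (G := G) hK (sum_twoWay_le_two hW1) L,
          sum_sum_walkWeight_transpose_le (G := G) hK (sum_twoWay_le_two hW1) L]
    _ = Fintype.card V * √(8 * Fintype.card V / L) ^ L := by
        have hsqrt : √(8 * Fintype.card V / L) = 2 * √(2 * Fintype.card V / L) := by
          rw [show (8 * Fintype.card V / L : ℝ) = 2 ^ 2 * (2 * Fintype.card V / L) by ring,
            sqrt_mul (by positivity), sqrt_sq zero_le_two]
        rw [hsqrt, mul_pow]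
        ring

end Substochastic

section RandomWalk

variable {V : Type*} (G : SimpleGraph V)

theorem deg_eq_degree (u : V) [Fintype (G.neighborSet u)] : deg G u = G.degree u :=
  Set.ncard_eq_toFinset_card' _

variable {G} in
theorem deg_pos [G.LocallyFinite] {u v : V} (h : G.Adj u v) : 0 < deg G u :=
  (Set.ncard_pos).2 ⟨v, h⟩

variable [DecidableRel G.Adj]

/-- The transition matrix of the simple random walk on `G`; rows at isolated vertices are zero. -/
def transition : Matrix V V ℝ := Matrix.of fun u v ↦ if G.Adj u v then (deg G u : ℝ)⁻¹ else 0

theorem transition_nonneg (u v : V) : 0 ≤ transition G u v := by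
  rw [transition, Matrix.of_apply]
  positivity

theorem sum_transition_le_one [Fintype V] (u : V) : ∑ v, transition G u v ≤ 1 :=
  calc ∑ v, transition G u v = (deg G u : ℝ) * (deg G u : ℝ)⁻¹ := by
        simp only [transition, Matrix.of_apply]
        rw [← Finset.sum_filter, Finset.sum_const, nsmul_eq_mul, ← G.neighborFinset_eq_filter,
          G.card_neighborFinset_eq_degree, deg_eq_degree]
    _ ≤ 1 := mul_inv_le_one

theorem symmMax_transition [G.LocallyFinite] {u v : V} (h : G.Adj u v) :
    symmMax (transition G) u v = (min (deg G u) (deg G v) : ℝ)⁻¹ := by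
  have hu : (0 : ℝ) < deg G u := mod_cast deg_pos h
  have hv : (0 : ℝ) < deg G v := mod_cast deg_pos h.symm
  simp only [symmMax, transition, Matrix.of_apply, if_pos h, if_pos h.symm]
  exact (antitoneOn_inv_pos.map_min hu hv).symm

theorem Q_eq_walkWeight [G.LocallyFinite] {u v : V} (p : G.Walk u v) :
    Q G p = walkWeight (symmMax (transition G)) p :=
  Finset.prod_congr rfl fun _ hi ↦
    (symmMax_transition G (p.adj_getVert_succ (Finset.mem_range.1 hi))).symm

end RandomWalk

theorem sum_Q_paths_le {V : Type*} [Fintype V] [DecidableEq V]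
    (G : SimpleGraph V) [DecidableRel G.Adj] (L : ℕ) (hL1 : 1 ≤ L)
    (hLn : L < Fintype.card V) :
    ∑ u : V, ∑ v : V,
        ∑ p ∈ (G.finsetWalkLength L u v).filter (fun p => p.IsPath), Q G p
      ≤ (8 * Real.exp 1 * (Fintype.card V : ℝ) / L) ^ ((L : ℝ) / 2 + 1) := by
  simp only [Q_eq_walkWeight]
  exact (sum_Q_paths_le_general G (transition_nonneg G) (sum_transition_le_one G) L).trans
    (card_mul_sqrt_pow_le (Nat.cast_nonneg _) hL1)

end RumourSpreading
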